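/- Let β be a nonzero real number, let β' be a real number, and let f ∈ 𝓢(ℝ², ℂ). Then for every ρ'' ∈ ℝ², K_{β'}[H_β[f]](ρ'') = K_{β'+β}[f](ρ''), where the outer transformation K_{β'} is applied to the function ρ' ↦ H_β[f](ρ'). That is, K_{β'} ∘ H_β = K_{β'+β}. -/

import Mathlib

open MeasureTheory Filter
open scoped RealInnerProductSpace

noncomputable section

/-- The Euclidean plane `ℝ²`. -/
abbrev Plane := EuclideanSpace ℝ (Fin 2)

/-- Hyperbolic fractional-order Fourier transformation of the first kind of order `β`
(for `β ≠ 0`), with `coth β = cosh β / sinh β`. -/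
def fracH (β : ℝ) (f : Plane → ℂ) (ρ' : Plane) : ℂ :=
  Complex.I * Real.exp β / Real.sinh β *
    Complex.exp (-(Complex.I * Real.pi * ‖ρ'‖ ^ 2 * (Real.cosh β / Real.sinh β))) *
    ∫ ρ : Plane,
      Complex.exp (-(Complex.I * Real.pi * ‖ρ‖ ^ 2 * (Real.cosh β / Real.sinh β))) *
      Complex.exp (2 * Real.pi * Complex.I * ⟪ρ', ρ⟫ / Real.sinh β) * f ρ

/-- Hyperbolic fractional-order Fourier transformation of the second kind of order `β`. -/
def fracK (β : ℝ) (f : Plane → ℂ) (ρ' : Plane) : ℂ :=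
  Complex.I * Real.exp β / Real.cosh β *
    Complex.exp (Complex.I * Real.pi * ‖ρ'‖ ^ 2 * Real.tanh β) *
    ∫ ρ : Plane,
      Complex.exp (-(Complex.I * Real.pi * ‖ρ‖ ^ 2 * Real.tanh β)) *
      Complex.exp (2 * Real.pi * Complex.I * ⟪ρ', ρ⟫ / Real.cosh β) * f ρ

open scoped Topology FourierTransform

/-- Iterated derivatives of the imaginary exponential `t ↦ exp (t * I)`. -/
lemma iteratedDeriv_cexp_ofReal_mul_I (n : ℕ) :
    iteratedDeriv n (fun t : ℝ => Complex.exp (t * Complex.I)) =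
      fun t : ℝ => Complex.I ^ n * Complex.exp (t * Complex.I) := by
  induction n with
  | zero => simp
  | succ n ih =>
    rw [iteratedDeriv_succ, ih]
    funext t
    have h : HasDerivAt (fun t : ℝ => Complex.exp (t * Complex.I))
        (Complex.exp (t * Complex.I) * (1 * Complex.I)) t :=
      (((hasDerivAt_id (t : ℂ)).mul_const Complex.I).cexp).comp_ofReal
    rw [(h.const_mul (Complex.I ^ n)).deriv]
    ring

lemma hasTemperateGrowth_cexp_ofReal_mul_I :
    (fun t : ℝ => Complex.exp (t * Complex.I)).HasTemperateGrowth := by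
  refine ⟨(Complex.ofRealCLM.contDiff.mul contDiff_const).cexp, fun n => ⟨0, 1, fun t => ?_⟩⟩
  rw [norm_iteratedFDeriv_eq_norm_iteratedDeriv, iteratedDeriv_cexp_ofReal_mul_I]
  simp [Complex.norm_exp_ofReal_mul_I]

section InnerProductSpace

variable {V : Type*} [NormedAddCommGroup V] [InnerProductSpace ℝ V]

/-- A chirp `x ↦ exp (i a ‖x‖²)` has temperate growth. -/
lemma hasTemperateGrowth_chirp (a : ℝ) :
    (fun x : V => Complex.exp ((a * ‖x‖ ^ 2 : ℝ) * Complex.I)).HasTemperateGrowth :=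
  hasTemperateGrowth_cexp_ofReal_mul_I.comp
    (f := fun x : V => a * ‖x‖ ^ 2)
    ((Function.HasTemperateGrowth.const a).mul (Function.hasTemperateGrowth_norm_sq V))

variable [FiniteDimensional ℝ V] [MeasurableSpace V] [BorelSpace V]

/-- The (scaled) Fourier integral of a Schwartz function is integrable. -/
lemma SchwartzMap.integrable_integral_cexp_inner_mul (g : SchwartzMap V ℂ) {σ : ℝ} (hσ : σ ≠ 0) :
    Integrable fun x : V =>
      ∫ y : V, Complex.exp (2 * Real.pi * Complex.I * (⟪x, y⟫ * σ)) * g y := by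
  convert (𝓕 g).integrable.comp_smul (μ := volume) (neg_ne_zero.mpr hσ) using 2 with x
  rw [SchwartzMap.fourier_coe, Real.fourier_eq']
  refine integral_congr_ae (.of_forall fun y => ?_)
  simp only [inner_smul_right, real_inner_comm, smul_eq_mul]
  congr 2
  push_cast
  ring

end InnerProductSpace

/-- Pairing a Gaussian of complex width with a Fourier integral on the plane. -/
lemma integral_gaussian_mul_integral_cexp {b : ℂ} (hb : 0 < b.re) (σ : ℝ) (w : Plane)
    {g : Plane → ℂ} (hg : Integrable g) :
    ∫ x : Plane, Complex.exp (-(Real.pi * b) * ‖x‖ ^ 2 + 2 * Real.pi * Complex.I * ⟪w, x⟫) *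
        ∫ y : Plane, Complex.exp (2 * Real.pi * Complex.I * (⟪x, y⟫ * σ)) * g y =
      1 / b * ∫ y : Plane, Complex.exp (-(Real.pi * ‖w + σ • y‖ ^ 2 / b)) * g y := by
  have hb' : 0 < ((Real.pi : ℂ) * b).re := by
    rw [Complex.re_ofReal_mul]
    exact mul_pos Real.pi_pos hb
  have hb0 : b ≠ 0 := by
    rintro rfl
    simp at hb
  have hπ : (Real.pi : ℂ) ≠ 0 := by exact_mod_cast Real.pi_ne_zero
  have hint : Integrable (Function.uncurry fun x y : Plane =>
      Complex.exp (-(Real.pi * b) * ‖x‖ ^ 2 + 2 * Real.pi * Complex.I * ⟪w, x⟫) *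
        (Complex.exp (2 * Real.pi * Complex.I * (⟪x, y⟫ * σ)) * g y))
      ((volume : Measure Plane).prod volume) := by
    have h := (GaussianFourier.integrable_cexp_neg_mul_sq_norm_add hb'
      (2 * Real.pi * Complex.I) w).mul_prod hg
    refine (h.bdd_mul (c := 1)
      (f := fun z : Plane × Plane =>
        Complex.exp (2 * Real.pi * Complex.I * (⟪z.1, z.2⟫ * σ))) ?_ ?_).congr ?_
    · exact Continuous.aestronglyMeasurable (by fun_prop)
    · refine .of_forall fun z => le_of_eq ?_
      rw [show (2 * Real.pi * Complex.I * (⟪z.1, z.2⟫ * σ) : ℂ) =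
        ((2 * Real.pi * (⟪z.1, z.2⟫ * σ) : ℝ) : ℂ) * Complex.I by push_cast; ring]
      exact Complex.norm_exp_ofReal_mul_I _
    · refine .of_forall fun z => ?_
      simp only [Function.uncurry]
      ring
  simp_rw [← integral_const_mul]
  rw [integral_integral_swap hint]
  refine integral_congr_ae (.of_forall fun y => ?_)
  have hx : ∀ x : Plane,
      Complex.exp (-(Real.pi * b) * ‖x‖ ^ 2 + 2 * Real.pi * Complex.I * ⟪w, x⟫) *
        (Complex.exp (2 * Real.pi * Complex.I * (⟪x, y⟫ * σ)) * g y) =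
      Complex.exp (-(Real.pi * b) * ‖x‖ ^ 2 + 2 * Real.pi * Complex.I * ⟪w + σ • y, x⟫) * g y := by
    intro x
    rw [← mul_assoc, ← Complex.exp_add, inner_add_left, real_inner_smul_left, real_inner_comm x y]
    congr 2
    push_cast
    ring
  simp only [hx]
  rw [integral_mul_const, GaussianFourier.integral_cexp_neg_mul_sq_norm_add hb',
    ← mul_assoc (1 / b)]
  congr 1
  rw [finrank_euclideanSpace_fin]
  congr 1
  · norm_num
    field_simp
  · congr 1
    field_simp
    rw [Complex.I_sq]
    ring

/-- Pairing a chirp with the Fourier integral of a Schwartz function on the plane. -/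
lemma SchwartzMap.integral_chirp_mul_integral_cexp (g : SchwartzMap Plane ℂ) {a σ : ℝ}
    (ha : a ≠ 0) (hσ : σ ≠ 0) (w : Plane) :
    ∫ x : Plane, Complex.exp (-(Real.pi * (a * Complex.I)) * ‖x‖ ^ 2 +
          2 * Real.pi * Complex.I * ⟪w, x⟫) *
        ∫ y : Plane, Complex.exp (2 * Real.pi * Complex.I * (⟪x, y⟫ * σ)) * g y =
      1 / (a * Complex.I) *
        ∫ y : Plane, Complex.exp (-(Real.pi * ‖w + σ • y‖ ^ 2 / (a * Complex.I))) * g y := by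
  have haI : (a * Complex.I : ℂ) ≠ 0 := mul_ne_zero (by exact_mod_cast ha) Complex.I_ne_zero
  have hG := g.integrable_integral_cexp_inner_mul hσ
  have hb : Tendsto (fun ε : ℝ => (ε + a * Complex.I : ℂ)) (𝓝[>] 0) (𝓝 (a * Complex.I)) := by
    have : Continuous fun ε : ℝ => (ε + a * Complex.I : ℂ) := by fun_prop
    simpa using (this.tendsto 0).mono_left nhdsWithin_le_nhds
  have hre : ∀ ε : ℝ, (ε + a * Complex.I : ℂ).re = ε := by simp
  have hleft : Tendsto (fun ε : ℝ => ∫ x : Plane,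
      Complex.exp (-(Real.pi * (ε + a * Complex.I)) * ‖x‖ ^ 2 +
          2 * Real.pi * Complex.I * ⟪w, x⟫) *
        ∫ y : Plane, Complex.exp (2 * Real.pi * Complex.I * (⟪x, y⟫ * σ)) * g y) (𝓝[>] 0)
      (𝓝 (∫ x : Plane, Complex.exp (-(Real.pi * (a * Complex.I)) * ‖x‖ ^ 2 +
          2 * Real.pi * Complex.I * ⟪w, x⟫) *
        ∫ y : Plane, Complex.exp (2 * Real.pi * Complex.I * (⟪x, y⟫ * σ)) * g y)) := by
    refine tendsto_integral_filter_of_dominated_convergence _ ?_ ?_ hG.norm ?_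
    · refine .of_forall fun ε => ?_
      exact (Continuous.aestronglyMeasurable (by fun_prop)).mul hG.aestronglyMeasurable
    · filter_upwards [self_mem_nhdsWithin] with ε hε
      refine .of_forall fun x => ?_
      rw [norm_mul]
      refine mul_le_of_le_one_left (norm_nonneg _) ?_
      rw [Complex.norm_exp, Real.exp_le_one_iff]
      have : (-(Real.pi * (ε + a * Complex.I)) * ‖x‖ ^ 2 +
          2 * Real.pi * Complex.I * ⟪w, x⟫ : ℂ) = ((-(Real.pi * ε * ‖x‖ ^ 2) : ℝ) : ℂ) +
          ((-(Real.pi * a * ‖x‖ ^ 2) + 2 * Real.pi * ⟪w, x⟫ : ℝ) : ℂ) * Complex.I := by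
        push_cast
        ring
      rw [this, Complex.add_re, Complex.ofReal_re, Complex.re_ofReal_mul, Complex.I_re, mul_zero,
        add_zero, neg_nonpos]
      have hε' : (0 : ℝ) < ε := hε
      positivity
    · refine .of_forall fun x => ?_
      refine Tendsto.mul_const _ ?_
      exact (((hb.const_mul _).neg.mul_const _).add_const _).cexp
  have hright : Tendsto (fun ε : ℝ => 1 / (ε + a * Complex.I : ℂ) *
        ∫ y : Plane, Complex.exp (-(Real.pi * ‖w + σ • y‖ ^ 2 / (ε + a * Complex.I))) * g y)
      (𝓝[>] 0) (𝓝 (1 / (a * Complex.I) *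
        ∫ y : Plane, Complex.exp (-(Real.pi * ‖w + σ • y‖ ^ 2 / (a * Complex.I))) * g y)) := by
    refine (tendsto_const_nhds.div hb haI).mul ?_
    refine tendsto_integral_filter_of_dominated_convergence _ ?_ ?_ g.integrable.norm ?_
    · refine .of_forall fun ε => ?_
      exact (Continuous.aestronglyMeasurable (by fun_prop)).mul g.integrable.aestronglyMeasurable
    · filter_upwards [self_mem_nhdsWithin] with ε hε
      refine .of_forall fun y => ?_
      rw [norm_mul]
      refine mul_le_of_le_one_left (norm_nonneg _) ?_
      rw [Complex.norm_exp, Real.exp_le_one_iff, Complex.neg_re, neg_nonpos, div_eq_mul_inv,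
        show (Real.pi * ‖w + σ • y‖ ^ 2 : ℂ) = ((Real.pi * ‖w + σ • y‖ ^ 2 : ℝ) : ℂ) by
          push_cast; rfl,
        Complex.re_ofReal_mul, Complex.inv_re, hre]
      have hε' : (0 : ℝ) < ε := hε
      have := Complex.normSq_nonneg (ε + a * Complex.I)
      positivity
    · refine .of_forall fun y => ?_
      refine Tendsto.mul_const _ ?_
      exact ((tendsto_const_nhds.div hb haI).neg).cexp
  refine tendsto_nhds_unique hleft (hright.congr' ?_)
  filter_upwards [self_mem_nhdsWithin] with ε hε
  refine (integral_gaussian_mul_integral_cexp ?_ σ w g.integrable).symm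
  rw [hre]
  exact hε

/-- `K_{β'} ∘ H_β = K_{β'+β}` on Schwartz functions. -/
theorem stmt10 (β β' : ℝ) (hβ : β ≠ 0)
    (f : SchwartzMap Plane ℂ) (ρ'' : Plane) :
    fracK β' (fun ρ' => fracH β (⇑f) ρ') ρ'' = fracK (β' + β) (⇑f) ρ'' := by
  have hs : Real.sinh β ≠ 0 := Real.sinh_eq_zero.not.mpr hβ
  have hc' : Real.cosh β' ≠ 0 := (Real.cosh_pos _).ne'
  have hC : Real.cosh (β' + β) ≠ 0 := (Real.cosh_pos _).ne'
  have hS : Real.sinh β = Real.sinh (β' + β) * Real.cosh β' -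
      Real.cosh (β' + β) * Real.sinh β' := by
    rw [← Real.sinh_sub, add_sub_cancel_left]
  have hcc : Real.cosh β' = Real.cosh (β' + β) * Real.cosh β -
      Real.sinh (β' + β) * Real.sinh β := by
    rw [← Real.cosh_sub, add_sub_cancel_right]
  have hadd := Real.cosh_add β' β
  have he := Real.exp_add β' β
  unfold fracK fracH
  simp only [Real.tanh_eq_sinh_div_cosh]
  rw [he]
  set s := Real.sinh β
  set c := Real.cosh β
  set s' := Real.sinh β'
  set c' := Real.cosh β'
  set S := Real.sinh (β' + β)
  set C := Real.cosh (β' + β)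
  have hsC : (s : ℂ) ≠ 0 := by exact_mod_cast hs
  have hc'C : (c' : ℂ) ≠ 0 := by exact_mod_cast hc'
  have hCC : (C : ℂ) ≠ 0 := by exact_mod_cast hC
  have hSC : (s : ℂ) = S * c' - C * s' := by exact_mod_cast hS
  have hccC : (c' : ℂ) = C * c - S * s := by exact_mod_cast hcc
  have haddC : (C : ℂ) = c' * c + s' * s := by exact_mod_cast hadd
  have hchirp := hasTemperateGrowth_chirp (V := Plane) (-(Real.pi * (c / s)))
  let g : SchwartzMap Plane ℂ := SchwartzMap.smulLeftCLM ℂ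
    (fun x : Plane => Complex.exp ((-(Real.pi * (c / s)) * ‖x‖ ^ 2 : ℝ) * Complex.I)) f
  have hg : ∀ x, g x =
      Complex.exp (-(Complex.I * Real.pi * ‖x‖ ^ 2 * (c / s))) * f x := by
    intro x
    rw [SchwartzMap.smulLeftCLM_apply_apply hchirp, smul_eq_mul]
    congr 2
    push_cast
    ring
  have hinner : ∀ x : Plane, (∫ y : Plane,
      Complex.exp (-(Complex.I * Real.pi * ‖y‖ ^ 2 * (c / s))) *
        Complex.exp (2 * Real.pi * Complex.I * ⟪x, y⟫ / s) * f y) =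
      ∫ y : Plane, Complex.exp (2 * Real.pi * Complex.I * (⟪x, y⟫ * (s⁻¹ : ℝ))) * g y := by
    intro x
    refine integral_congr_ae (.of_forall fun y => ?_)
    simp only [hg]
    rw [mul_comm (Complex.exp (-_)), mul_assoc]
    congr 2
    push_cast
    ring
  simp only [hinner]
  have ha : C / (c' * s) ≠ 0 := div_ne_zero hC (mul_ne_zero hc' hs)
  have key := g.integral_chirp_mul_integral_cexp ha (inv_ne_zero hs) (c'⁻¹ • ρ'')
  have houter : ∀ x : Plane,
      Complex.exp (-(Complex.I * Real.pi * ‖x‖ ^ 2 * (s' / c' : ℝ))) *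
        Complex.exp (2 * Real.pi * Complex.I * ⟪ρ'', x⟫ / c') *
        (Complex.I * Real.exp β / s *
          Complex.exp (-(Complex.I * Real.pi * ‖x‖ ^ 2 * (c / s))) *
          ∫ y : Plane, Complex.exp (2 * Real.pi * Complex.I * (⟪x, y⟫ * (s⁻¹ : ℝ))) * g y) =
      Complex.I * Real.exp β / s *
        (Complex.exp (-(Real.pi * ((C / (c' * s) : ℝ) * Complex.I)) * ‖x‖ ^ 2 +
          2 * Real.pi * Complex.I * ⟪c'⁻¹ • ρ'', x⟫) *
        ∫ y : Plane, Complex.exp (2 * Real.pi * Complex.I * (⟪x, y⟫ * (s⁻¹ : ℝ))) * g y) := by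
    intro x
    have : Complex.exp (-(Real.pi * ((C / (c' * s) : ℝ) * Complex.I)) * ‖x‖ ^ 2 +
          2 * Real.pi * Complex.I * ⟪c'⁻¹ • ρ'', x⟫) =
        Complex.exp (-(Complex.I * Real.pi * ‖x‖ ^ 2 * (s' / c' : ℝ))) *
        Complex.exp (2 * Real.pi * Complex.I * ⟪ρ'', x⟫ / c') *
        Complex.exp (-(Complex.I * Real.pi * ‖x‖ ^ 2 * (c / s))) := by
      rw [← Complex.exp_add, ← Complex.exp_add, real_inner_smul_left]
      congr 1
      push_cast
      rw [haddC]
      field_simp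
      ring
    rw [this]
    ring
  simp only [houter]
  rw [integral_const_mul, key]
  simp only [← integral_const_mul]
  refine integral_congr_ae (.of_forall fun y => ?_)
  simp only [hg]
  have hnorm : ((‖c'⁻¹ • ρ'' + s⁻¹ • y‖ : ℝ) : ℂ) ^ 2 =
      ‖ρ''‖ ^ 2 / c' ^ 2 + 2 * ⟪ρ'', y⟫ / (c' * s) + ‖y‖ ^ 2 / s ^ 2 := by
    rw [← Complex.ofReal_pow, norm_add_sq_real, norm_smul, norm_smul, mul_pow, mul_pow,
      real_inner_smul_left, real_inner_smul_right, Real.norm_eq_abs, Real.norm_eq_abs, sq_abs,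
      sq_abs]
    push_cast
    field_simp
  have hexp : Complex.exp (Complex.I * Real.pi * ‖ρ''‖ ^ 2 * (s' / c' : ℝ)) *
        Complex.exp (-(Real.pi * ‖c'⁻¹ • ρ'' + s⁻¹ • y‖ ^ 2 /
          ((C / (c' * s) : ℝ) * Complex.I))) *
        Complex.exp (-(Complex.I * Real.pi * ‖y‖ ^ 2 * (c / s))) =
      Complex.exp (Complex.I * Real.pi * ‖ρ''‖ ^ 2 * (S / C : ℝ)) *
        Complex.exp (-(Complex.I * Real.pi * ‖y‖ ^ 2 * (S / C : ℝ))) *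
        Complex.exp (2 * Real.pi * Complex.I * ⟪ρ'', y⟫ / C) := by
    simp only [← Complex.exp_add]
    congr 1
    have h₁ : (s' / c' : ℂ) = S / C - s / (c' * C) := by
      rw [hSC]
      field_simp
      ring
    have h₂ : (c / s : ℂ) = S / C + c' / (s * C) := by
      rw [hccC]
      field_simp
      ring
    have hI : ((((C / (c' * s) : ℝ) : ℂ)) * Complex.I)⁻¹ = -Complex.I * (c' * s / C) := by
      rw [mul_inv, Complex.inv_I]
      push_cast
      rw [inv_div]
      ring
    rw [div_eq_mul_inv _ ((((C / (c' * s) : ℝ) : ℂ)) * Complex.I), hI, hnorm, h₂]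
    push_cast
    rw [h₁]
    field_simp
    ring
  have hpre : Complex.I * Real.exp β' / c' * (Complex.I * Real.exp β / s *
      (1 / ((C / (c' * s) : ℝ) * Complex.I))) =
      Complex.I * (Real.exp β' * Real.exp β : ℝ) / C := by
    push_cast
    field_simp
  calc _ = (Complex.I * Real.exp β' / c' * (Complex.I * Real.exp β / s *
        (1 / ((C / (c' * s) : ℝ) * Complex.I)))) *
        (Complex.exp (Complex.I * Real.pi * ‖ρ''‖ ^ 2 * (s' / c' : ℝ)) *
        Complex.exp (-(Real.pi * ‖c'⁻¹ • ρ'' + s⁻¹ • y‖ ^ 2 /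
          ((C / (c' * s) : ℝ) * Complex.I))) *
        Complex.exp (-(Complex.I * Real.pi * ‖y‖ ^ 2 * (c / s)))) * f y := by ring
    _ = _ := by
      rw [hexp, hpre]
      ring

end
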